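/- Let k=(k_1,…,k_r) be a composition, let m be a positive integer, and let α∈ℂ∖ℕ with ℜ(α)<1. Then ∫_0^1 A(k;x)·log^m((1−x)/(1+x))/(x·((1−x)/(1+x))^α) dx = (−1)^m·(d^m/dα^m) T((←k^∨)_+; 1−α), the m-th derivative of the function α ↦ T((←k^∨)_+; 1−α). -/

import Mathlib

open scoped BigOperators
open MeasureTheory

/-- Multiple polylogarithm `Li_k(z) = Σ_{n₁>⋯>n_r>0} z^{n₁}/(n₁^{k₁}⋯n_r^{k_r})`. -/
noncomputable def MPL (k : List ℕ) (z : ℝ) : ℝ :=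
  if h : 0 < k.length then
    ∑' n : {n : Fin k.length → ℕ // StrictAnti n ∧ ∀ i, 0 < n i},
      z ^ (n.1 ⟨0, h⟩) / ∏ i, (n.1 i : ℝ) ^ k.get i
  else 1

/-- Level-two multiple polylogarithm
`A(k;x) = 2^r Σ_{n₁>⋯>n_r>0, n_j ≡ r+1-j (mod 2)} x^{n₁}/(n₁^{k₁}⋯n_r^{k_r})`. -/
noncomputable def AFn (k : List ℕ) (x : ℝ) : ℝ :=
  if h : 0 < k.length then
    2 ^ k.length *
      ∑' n : {n : Fin k.length → ℕ //
          StrictAnti n ∧ (∀ i, 0 < n i) ∧ ∀ i, n i % 2 = (k.length - i.val) % 2},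
        x ^ (n.1 ⟨0, h⟩) / ∏ i, (n.1 i : ℝ) ^ k.get i
  else 1

/-- Multiple zeta value `ζ(k) = Σ_{n₁>⋯>n_r>0} ∏ 1/n_i^{k_i}`. -/
noncomputable def MZV (k : List ℕ) : ℝ :=
  ∑' n : {n : Fin k.length → ℕ // StrictAnti n ∧ ∀ i, 0 < n i},
    ∏ i, 1 / (n.1 i : ℝ) ^ k.get i

/-- Multiple zeta star value `ζ⋆(k) = Σ_{n₁≥⋯≥n_r>0} ∏ 1/n_i^{k_i}`. -/
noncomputable def MZSV (k : List ℕ) : ℝ :=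
  ∑' n : {n : Fin k.length → ℕ // Antitone n ∧ ∀ i, 0 < n i},
    ∏ i, 1 / (n.1 i : ℝ) ^ k.get i

/-- Multiple T-value `T(k) = 2^r Σ_{n₁>⋯>n_r>0, n_j ≡ r+1-j (mod 2)} ∏ 1/n_i^{k_i}`. -/
noncomputable def MTV (k : List ℕ) : ℝ :=
  2 ^ k.length *
    ∑' n : {n : Fin k.length → ℕ //
        StrictAnti n ∧ (∀ i, 0 < n i) ∧ ∀ i, n i % 2 = (k.length - i.val) % 2},
      ∏ i, 1 / (n.1 i : ℝ) ^ k.get i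

/-- Hurwitz-type multiple zeta value `ζ(k;α) = Σ_{n₁>⋯>n_r>0} ∏ (n_i+α-1)^{-k_i}`. -/
noncomputable def HMZV (k : List ℕ) (α : ℂ) : ℂ :=
  ∑' n : {n : Fin k.length → ℕ // StrictAnti n ∧ ∀ i, 0 < n i},
    ∏ i, ((n.1 i : ℂ) + α - 1) ^ (-(k.get i : ℤ))

/-- Hurwitz-type multiple zeta star value `ζ⋆(k;α) = Σ_{n₁≥⋯≥n_r>0} ∏ (n_i+α-1)^{-k_i}`. -/
noncomputable def HMZSV (k : List ℕ) (α : ℂ) : ℂ :=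
  ∑' n : {n : Fin k.length → ℕ // Antitone n ∧ ∀ i, 0 < n i},
    ∏ i, ((n.1 i : ℂ) + α - 1) ^ (-(k.get i : ℤ))

/-- Hurwitz-type multiple T-value
`T(k;α) = Σ_{m₁>⋯>m_r>0} 2^r ∏_i (2m_i - r - 2 + i + α)^{-k_i}` (1-indexed `i`). -/
noncomputable def HMTV (k : List ℕ) (α : ℂ) : ℂ :=
  ∑' n : {n : Fin k.length → ℕ // StrictAnti n ∧ ∀ i, 0 < n i},
    2 ^ k.length *
      ∏ i, (2 * (n.1 i : ℂ) - (k.length : ℂ) - 1 + (i.val : ℂ) + α) ^ (-(k.get i : ℤ))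

/-- The boolean word (sequence of bits between consecutive units) of a composition. -/
def toWord : List ℕ → List Bool
  | [] => []
  | [a] => List.replicate (a - 1) false
  | a :: b :: rest => List.replicate (a - 1) false ++ true :: toWord (b :: rest)

/-- The composition corresponding to a boolean word. -/
def fromWord : List Bool → List ℕ
  | [] => [1]
  | false :: w =>
    match fromWord w with
    | [] => [1]
    | a :: t => (a + 1) :: t
  | true :: w => 1 :: fromWord w

/-- Hoffman dual of a composition: swap commas and plus signs in
`k = (1+⋯+1, …, 1+⋯+1)`. -/
def HDual (k : List ℕ) : List ℕ := fromWord ((toWord k).map fun b => !b)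

/-- `k₊ = (k₁+1, k₂, …, k_r)`. -/
def plusOne : List ℕ → List ℕ
  | [] => []
  | a :: t => (a + 1) :: t

/-- `Refines l k` means the composition `k` can be obtained from `l`
by combining some consecutive parts of `l`, i.e. `l ⪰ k`. -/
inductive Refines : List ℕ → List ℕ → Prop
  | nil : Refines [] []
  | cons (b l k : List ℕ) : b ≠ [] → Refines l k → Refines (b ++ l) (b.sum :: k)

/-- Arakawa–Kaneko zeta function `ξ(s;k) = (1/Γ(s)) ∫_0^∞ t^{s-1}/(e^t-1) Li_k(1-e^{-t}) dt`. -/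
noncomputable def xiAK (s : ℂ) (k : List ℕ) : ℂ :=
  (1 / Complex.Gamma s) *
    ∫ t in Set.Ioi (0 : ℝ),
      (t : ℂ) ^ (s - 1) / ((Real.exp t : ℂ) - 1) * (MPL k (1 - Real.exp (-t)) : ℂ)

/-- Kaneko–Tsumura η-function `η(s;k) = (1/Γ(s)) ∫_0^∞ t^{s-1}/(1-e^t) Li_k(1-e^{t}) dt`. -/
noncomputable def etaKT (s : ℂ) (k : List ℕ) : ℂ :=
  (1 / Complex.Gamma s) *
    ∫ t in Set.Ioi (0 : ℝ),
      (t : ℂ) ^ (s - 1) / (1 - (Real.exp t : ℂ)) * (MPL k (1 - Real.exp t) : ℂ)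

/-- Kaneko–Tsumura ψ-function `ψ(s;k) = (1/Γ(s)) ∫_0^∞ t^{s-1} A(k; tanh(t/2))/sinh(t) dt`. -/
noncomputable def psiKT (s : ℂ) (k : List ℕ) : ℂ :=
  (1 / Complex.Gamma s) *
    ∫ t in Set.Ioi (0 : ℝ),
      (t : ℂ) ^ (s - 1) * ((AFn k (Real.tanh (t / 2)) / Real.sinh t : ℝ) : ℂ)

/-- Riemann zeta value `ζ(a) = Σ_{n>0} 1/n^a`. -/
noncomputable def zeta1 (a : ℕ) : ℝ := ∑' n : {n : ℕ // 0 < n}, 1 / (n.1 : ℝ) ^ a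

/-- Double zeta value `ζ(a,b) = Σ_{n₁>n₂>0} 1/(n₁^a n₂^b)`. -/
noncomputable def zeta2 (a b : ℕ) : ℝ :=
  ∑' p : {p : ℕ × ℕ // p.2 < p.1 ∧ 0 < p.2}, 1 / ((p.1.1 : ℝ) ^ a * (p.1.2 : ℝ) ^ b)

/-- Single T-value `T(a) = 2 Σ_{n>0 odd} 1/n^a`. -/
noncomputable def T1 (a : ℕ) : ℝ := 2 * ∑' n : {n : ℕ // 0 < n ∧ n % 2 = 1}, 1 / (n.1 : ℝ) ^ a

/-- Double T-value `T(a,b) = 4 Σ_{n₁>n₂>0, n₁ even, n₂ odd} 1/(n₁^a n₂^b)`. -/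
noncomputable def T2 (a b : ℕ) : ℝ :=
  4 * ∑' p : {p : ℕ × ℕ // p.2 < p.1 ∧ 0 < p.2 ∧ p.1 % 2 = 0 ∧ p.2 % 2 = 1},
    1 / ((p.1.1 : ℝ) ^ a * (p.1.2 : ℝ) ^ b)

/-!
Put `u = (1 - x) / (1 + x)`. Integrating `u ^ s` against an iterated integral of the forms `dx / x`
and `2 dx / (1 - x ^ 2)`, one letter of its word at a time, gives

* `∫ u ^ s · 2 dx / (1 - x ^ 2) = u(y) ^ s / s` over `(y, 1)`, so the letter
  `2 dx / (1 - x ^ 2)` contributes a factor `1 / s`, and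
* `1 / x = ∑ⱼ 2 u ^ (1 + 2 j) · 2 / (1 - x ^ 2)`, so the letter `dx / x` contributes a new summation
  `∑ⱼ 2 / (s + 1 + 2 j)`.

Hence `∫ A(k; x) u ^ (-b) dx / x` is a nested sum in which each letter either raises the exponent of
the current factor or opens a new one. This is the Hoffman dual read backwards, so the integral is
`T((←k^∨)₊; 1 - b)` for real `b < 1`. All terms are nonnegative, so these manipulations are free in
`ℝ≥0∞`, and the values are finite by telescoping `∑ⱼ 2 / (s + 1 + 2 j) ^ 2 ≤ 1 / s`.

As a function of `b` the integral is the moment generating function of `-log u` with respect to the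
measure `A(k; x) dx / x`. It extends analytically to `Re β < 1`, as does the `T`-value, so the two
agree there by the identity theorem, and their derivatives are moments of `-log u`.
-/

open Set Filter ProbabilityTheory
open scoped ENNReal Topology

section Preliminaries

theorem lintegral_lintegral_Ioo_swap {ι : Type*} [LinearOrder ι] [TopologicalSpace ι]
    [OrderClosedTopology ι] [SecondCountableTopology ι] [MeasurableSpace ι]
    [OpensMeasurableSpace ι] {μ : Measure ι} [SFinite μ] (a b : ι) {f : ι → ι → ℝ≥0∞}
    (hf : Measurable (Function.uncurry f)) :
    ∫⁻ x in Ioo a b, ∫⁻ y in Ioo a x, f x y ∂μ ∂μ =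
      ∫⁻ y in Ioo a b, ∫⁻ x in Ioo y b, f x y ∂μ ∂μ := by
  let g : ι → ι → ℝ≥0∞ := fun x y => if a < y ∧ y < x ∧ x < b then f x y else 0
  have hg : Measurable (Function.uncurry g) := by
    refine Measurable.ite ?_ hf measurable_const
    exact (measurableSet_lt measurable_const measurable_snd).inter
      ((measurableSet_lt measurable_snd measurable_fst).inter
        (measurableSet_lt measurable_fst measurable_const))
  have left : ∫⁻ x in Ioo a b, ∫⁻ y in Ioo a x, f x y ∂μ ∂μ = ∫⁻ x, ∫⁻ y, g x y ∂μ ∂μ := by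
    simp_rw [← lintegral_indicator measurableSet_Ioo]
    refine lintegral_congr fun x => ?_
    by_cases hx : x ∈ Ioo a b
    · rw [indicator_of_mem hx]
      refine lintegral_congr fun y => ?_
      simp only [g, indicator, mem_Ioo, hx.2, and_true]
    · rw [indicator_of_notMem hx]
      refine (lintegral_eq_zero_of_ae_eq_zero (.of_forall fun y => if_neg fun h => hx ?_)).symm
      exact ⟨h.1.trans h.2.1, h.2.2⟩
  have right : ∫⁻ y in Ioo a b, ∫⁻ x in Ioo y b, f x y ∂μ ∂μ = ∫⁻ y, ∫⁻ x, g x y ∂μ ∂μ := by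
    simp_rw [← lintegral_indicator measurableSet_Ioo]
    refine lintegral_congr fun y => ?_
    by_cases hy : y ∈ Ioo a b
    · rw [indicator_of_mem hy]
      refine lintegral_congr fun x => ?_
      simp only [g, indicator, mem_Ioo, hy.1, true_and]
    · rw [indicator_of_notMem hy]
      refine (lintegral_eq_zero_of_ae_eq_zero (.of_forall fun x => if_neg fun h => hy ?_)).symm
      exact ⟨h.1, h.2.1.trans h.2.2⟩
  rw [left, right, lintegral_lintegral_swap hg.aemeasurable]

theorem lintegral_Ioo_ofReal_of_hasDerivAt {a b : ℝ} (hab : a ≤ b) {f f' : ℝ → ℝ}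
    (hcont : ContinuousOn f (Icc a b)) (hderiv : ∀ x ∈ Ioo a b, HasDerivAt f (f' x) x)
    (hpos : ∀ x ∈ Ioo a b, 0 ≤ f' x) :
    ∫⁻ x in Ioo a b, ENNReal.ofReal (f' x) = ENNReal.ofReal (f b - f a) := by
  have hint : IntegrableOn f' (Ioc a b) :=
    intervalIntegral.integrableOn_deriv_of_nonneg hcont hderiv hpos
  rw [← intervalIntegral.integral_eq_sub_of_hasDerivAt_of_le hab hcont hderiv
      ((intervalIntegrable_iff_integrableOn_Ioc_of_le hab).2 hint),
    intervalIntegral.integral_of_le hab, integral_Ioc_eq_integral_Ioo,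
    ofReal_integral_eq_lintegral_ofReal (hint.mono_set Ioo_subset_Ioc_self)
      ((ae_restrict_iff' measurableSet_Ioo).2 (.of_forall hpos))]

theorem lintegral_Ioo_ofReal_pow {x : ℝ} (hx : 0 ≤ x) (N : ℕ) :
    ∫⁻ y in Ioo 0 x, ENNReal.ofReal (y ^ N)
      = ENNReal.ofReal (((N + 1 : ℕ) : ℝ)⁻¹) * ENNReal.ofReal (x ^ (N + 1)) := by
  have hderiv (y : ℝ) : HasDerivAt (fun y => ((N + 1 : ℕ) : ℝ)⁻¹ * y ^ (N + 1)) (y ^ N) y := by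
    refine ((hasDerivAt_pow (N + 1) y).const_mul _).congr_deriv ?_
    rw [Nat.add_sub_cancel, inv_mul_cancel_left₀ (by positivity)]
  rw [lintegral_Ioo_ofReal_of_hasDerivAt hx (by fun_prop) (fun y _ => hderiv y)
      (fun y hy => pow_nonneg hy.1.le N), zero_pow N.succ_ne_zero, mul_zero, sub_zero,
    ENNReal.ofReal_mul (by positivity)]

theorem tsum_ofReal_pow_add_two_mul {y : ℝ} (hy₀ : 0 ≤ y) (hy₁ : y < 1) (M : ℕ) :
    ∑' j : ℕ, ENNReal.ofReal (y ^ (M + 2 * j)) = ENNReal.ofReal (y ^ M / (1 - y ^ 2)) := by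
  have hsum : HasSum (fun j : ℕ => y ^ (M + 2 * j)) (y ^ M / (1 - y ^ 2)) := by
    simpa only [pow_add, pow_mul, div_eq_mul_inv] using
      (hasSum_geometric_of_lt_one (sq_nonneg y) (pow_lt_one₀ hy₀ hy₁ two_ne_zero)).mul_left (y ^ M)
  rw [← ENNReal.ofReal_tsum_of_nonneg (fun j => by positivity) hsum.summable, hsum.tsum_eq]

theorem sum_range_two_div_sq_le {s : ℝ} (hs : 0 < s) (n : ℕ) :
    ∑ j ∈ Finset.range n, 2 / (s + 1 + 2 * (j : ℝ)) ^ 2 ≤ 1 / s - 1 / (s + 2 * n) := by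
  induction n with
  | zero => simp
  | succ n ih =>
    have hterm : 2 / (s + 1 + 2 * (n : ℝ)) ^ 2
        ≤ 1 / (s + 2 * n) - 1 / (s + 2 * ((n + 1 : ℕ) : ℝ)) := by
      push_cast
      rw [div_sub_div _ _ (by positivity) (by positivity),
        div_le_div_iff₀ (by positivity) (by positivity)]
      nlinarith
    rw [Finset.sum_range_succ]
    linarith

theorem tsum_two_mul_ofReal_inv_sq_le {s : ℝ} (hs : 0 < s) :
    ∑' j : ℕ, 2 * ENNReal.ofReal (s + 1 + 2 * j)⁻¹ ^ 2 ≤ ENNReal.ofReal s⁻¹ := by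
  refine ENNReal.tsum_le_of_sum_range_le fun n => ?_
  calc ∑ j ∈ Finset.range n, 2 * ENNReal.ofReal (s + 1 + 2 * (j : ℝ))⁻¹ ^ 2
      = ∑ j ∈ Finset.range n, ENNReal.ofReal (2 / (s + 1 + 2 * (j : ℝ)) ^ 2) :=
        Finset.sum_congr rfl fun j _ => by
          rw [div_eq_mul_inv, ENNReal.ofReal_mul zero_le_two, ENNReal.ofReal_ofNat, ← inv_pow,
            ENNReal.ofReal_pow (by positivity)]
    _ = ENNReal.ofReal (∑ j ∈ Finset.range n, 2 / (s + 1 + 2 * (j : ℝ)) ^ 2) :=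
        (ENNReal.ofReal_sum_of_nonneg fun j _ => by positivity).symm
    _ ≤ ENNReal.ofReal s⁻¹ := by
        have hpos : 0 < 1 / (s + 2 * (n : ℝ)) := by positivity
        have hle := sum_range_two_div_sq_le hs n
        rw [one_div s] at hle
        exact ENNReal.ofReal_le_ofReal (by linarith)

theorem eqOn_of_frequently_eq_ofReal {f g : ℂ → ℂ} {U : Set ℂ} (hf : AnalyticOnNhd ℂ f U)
    (hg : AnalyticOnNhd ℂ g U) (hU : IsPreconnected U) {t : ℝ} (ht : (t : ℂ) ∈ U)
    (h : ∃ᶠ x : ℝ in 𝓝[≠] t, f x = g x) : EqOn f g U := by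
  have hofReal : Tendsto ((↑) : ℝ → ℂ) (𝓝[≠] t) (𝓝[≠] (t : ℂ)) :=
    Complex.continuous_ofReal.continuousWithinAt.tendsto_nhdsWithin
      fun _ hx => Complex.ofReal_injective.ne hx
  exact hf.eqOn_of_preconnected_of_frequently_eq hg hU ht (hofReal.frequently h)

end Preliminaries

theorem add_le_of_strictAnti {r : ℕ} {n : Fin r → ℕ} (hn : StrictAnti n) {i j : Fin r} {d : ℕ}
    (hij : j.val = i.val + d) : n j + d ≤ n i := by
  induction d generalizing j with
  | zero =>
    obtain rfl : j = i := Fin.ext (by simpa using hij)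
    rw [add_zero]
  | succ d ih =>
    let j' : Fin r := ⟨i.val + d, by omega⟩
    have hstep : n j < n j' := hn (Fin.mk_lt_of_lt_val (by omega))
    have := ih (j := j') rfl
    omega

theorem sub_le_of_strictAnti_of_pos {r : ℕ} {n : Fin r → ℕ} (hn : StrictAnti n)
    (hpos : ∀ i, 0 < n i) (i : Fin r) : r - i.val ≤ n i := by
  have hi := i.isLt
  let last : Fin r := ⟨r - 1, by omega⟩
  have hgap : n last + (r - 1 - i.val) ≤ n i :=
    add_le_of_strictAnti hn (show r - 1 = i.val + (r - 1 - i.val) by omega)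
  have := hpos last
  omega

/-- The summation range of `AFn`: strictly decreasing sequences `n₁ > ⋯ > n_r > 0` with
`n_j ≡ r + 1 - j (mod 2)`, indexed from `0`. -/
abbrev ParitySeq (r : ℕ) : Type :=
  {n : Fin r → ℕ // StrictAnti n ∧ (∀ i, 0 < n i) ∧ ∀ i, n i % 2 = (r - i.val) % 2}

namespace ParitySeq

variable {r : ℕ}

/-- The largest entry `n₁` of the sequence, with value `0` on the empty sequence. -/
def top (n : ParitySeq r) : ℕ := if h : 0 < r then n.1 ⟨0, h⟩ else 0

theorem top_eq (n : ParitySeq r) (h : 0 < r) : n.top = n.1 ⟨0, h⟩ := dif_pos h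

theorem le_top (n : ParitySeq r) (i : Fin r) : n.1 i ≤ n.top := by
  rw [n.top_eq i.pos]
  exact n.2.1.antitone (Fin.mk_le_of_le_val (Nat.zero_le _))

theorem top_pos (n : ParitySeq r) (h : 0 < r) : 0 < n.top := by
  rw [n.top_eq h]
  exact n.2.2.1 _

theorem top_mod_two (n : ParitySeq r) : n.top % 2 = r % 2 := by
  rcases r.eq_zero_or_pos with rfl | h
  · rfl
  · rw [n.top_eq h, n.2.2.2, Nat.sub_zero]

theorem sub_pos (n : ParitySeq r) {b : ℝ} (hb : b < 1) (i : Fin r) : 0 < (n.1 i : ℝ) - b :=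
  _root_.sub_pos.2 (hb.trans_le (Nat.one_le_cast.2 (n.2.2.1 i)))

/-- The sequence `top t + 1 + 2 j > t₁ > ⋯ > t_r`. -/
def cons (t : ParitySeq r) (j : ℕ) : ParitySeq (r + 1) :=
  ⟨Fin.cons (t.top + 1 + 2 * j) t.1, by
    refine ⟨Fin.strictAnti_iff_succ_lt.2 fun i => ?_, Fin.cases ?_ t.2.2.1,
      Fin.cases ?_ fun i => ?_⟩
    · cases r with
      | zero => exact i.elim0
      | succ r =>
        rw [Fin.cons_succ]
        induction i using Fin.cases with
        | zero => have := t.le_top 0; simp only [Fin.castSucc_zero, Fin.cons_zero]; omega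
        | succ i => exact t.2.1 (Fin.castSucc_lt_succ)
    · rw [Fin.cons_zero]; omega
    · have := t.top_mod_two
      rw [Fin.cons_zero, Fin.val_zero]; omega
    · rw [Fin.cons_succ, t.2.2.2, Fin.val_succ, Nat.add_sub_add_right]⟩

/-- The sequence with its largest entry removed. -/
def tail (n : ParitySeq (r + 1)) : ParitySeq r :=
  ⟨Fin.tail n.1, fun _ _ h => n.2.1 (Fin.succ_lt_succ_iff.2 h), fun _ => n.2.2.1 _, fun i => by
    change n.1 i.succ % 2 = _
    rw [n.2.2.2, Fin.val_succ, Nat.add_sub_add_right]⟩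

theorem top_tail_lt (n : ParitySeq (r + 1)) : n.tail.top < n.1 0 := by
  rcases r.eq_zero_or_pos with rfl | h
  · exact n.2.2.1 0
  · rw [top_eq _ h]
    exact n.2.1 (Fin.succ_pos _)

/-- Splitting off the largest entry `n₁ = n₂ + 1 + 2 j` (where `n₂ = 0` if `r = 0`); it is encoded
by `j`. -/
def consEquiv (r : ℕ) : ParitySeq r × ℕ ≃ ParitySeq (r + 1) where
  toFun p := p.1.cons p.2
  invFun n := (n.tail, (n.1 0 - n.tail.top - 1) / 2)
  left_inv := fun ⟨t, j⟩ => Prod.ext rfl (show (t.top + 1 + 2 * j - t.top - 1) / 2 = j by omega)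
  right_inv n := by
    have hhead : n.tail.top + 1 + 2 * ((n.1 0 - n.tail.top - 1) / 2) = n.1 0 := by
      have hlt := n.top_tail_lt
      have htail := n.tail.top_mod_two
      have hmod := n.2.2.2 0
      rw [Fin.val_zero] at hmod
      omega
    exact Subtype.ext ((congrArg (Fin.cons · (Fin.tail n.1)) hhead).trans (Fin.cons_self_tail n.1))

/-- The substitution `n_j = 2 m_j - (r + 1 - j)`, which turns the summation range of `HMTV` into
that of `AFn`. -/
def equivStrictAnti (r : ℕ) :
    {m : Fin r → ℕ // StrictAnti m ∧ ∀ i, 0 < m i} ≃ ParitySeq r where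
  toFun m := ⟨fun i => 2 * m.1 i - (r - i.val), by
    have hle := sub_le_of_strictAnti_of_pos m.2.1 m.2.2
    refine ⟨fun i j hij => ?_, fun i => ?_, fun i => ?_⟩
    · have : i.val < j.val := hij
      have hgap := add_le_of_strictAnti m.2.1 (show j.val = i.val + (j.val - i.val) by omega)
      have := hle i
      have := hle j
      change 2 * m.1 j - (r - j.val) < 2 * m.1 i - (r - i.val)
      omega
    · have := hle i
      change 0 < 2 * m.1 i - (r - i.val)
      omega
    · have := hle i
      change (2 * m.1 i - (r - i.val)) % 2 = (r - i.val) % 2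
      omega⟩
  invFun n := ⟨fun i => (n.1 i + (r - i.val)) / 2, by
    refine ⟨fun i j hij => ?_, fun i => ?_⟩
    · have : i.val < j.val := hij
      have hlt := n.2.1 hij
      have := n.2.2.2 i
      have := n.2.2.2 j
      change (n.1 j + (r - j.val)) / 2 < (n.1 i + (r - i.val)) / 2
      omega
    · have := n.2.2.1 i
      change 0 < (n.1 i + (r - i.val)) / 2
      omega⟩
  left_inv m := by
    refine Subtype.ext (funext fun i => ?_)
    have := sub_le_of_strictAnti_of_pos m.2.1 m.2.2 i
    change (2 * m.1 i - (r - i.val) + (r - i.val)) / 2 = m.1 i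
    omega
  right_inv n := by
    refine Subtype.ext (funext fun i => ?_)
    have := n.2.2.2 i
    change 2 * ((n.1 i + (r - i.val)) / 2) - (r - i.val) = n.1 i
    omega

end ParitySeq

section Words

theorem fromWord_ne_nil (w : List Bool) : fromWord w ≠ [] := by
  cases w with
  | nil => exact List.cons_ne_nil _ _
  | cons c w =>
    cases c with
    | true => exact List.cons_ne_nil _ _
    | false =>
      rw [fromWord]
      split <;> exact List.cons_ne_nil _ _

theorem fromWord_false_cons (w : List Bool) : fromWord (false :: w) = plusOne (fromWord w) := by
  obtain ⟨a, t, h⟩ := List.exists_cons_of_ne_nil (fromWord_ne_nil w)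
  rw [fromWord, h, plusOne]

theorem fromWord_replicate_false_append {w : List Bool} {a : ℕ} {t : List ℕ}
    (h : fromWord w = a :: t) (n : ℕ) :
    fromWord (List.replicate n false ++ w) = (a + n) :: t := by
  induction n with
  | zero => exact h
  | succ n ih => rw [List.replicate_succ, List.cons_append, fromWord_false_cons, ih, plusOne,
      add_assoc]

theorem fromWord_toWord : ∀ {k : List ℕ}, k ≠ [] → (∀ a ∈ k, 0 < a) → fromWord (toWord k) = k
  | [a], _, hpos => by
    rw [toWord, ← List.append_nil (List.replicate _ _), fromWord_replicate_false_append rfl,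
      Nat.add_sub_cancel' (hpos a List.mem_cons_self)]
  | a :: b :: k, _, hpos => by
    have ih := fromWord_toWord (List.cons_ne_nil b k) fun c hc =>
      hpos c (List.mem_cons_of_mem a hc)
    have hword : fromWord (true :: toWord (b :: k)) = 1 :: b :: k := congrArg (List.cons 1) ih
    rw [toWord, fromWord_replicate_false_append hword,
      Nat.add_sub_cancel' (hpos a List.mem_cons_self)]

theorem toWord_append : ∀ {k l : List ℕ}, k ≠ [] → l ≠ [] →
    toWord (k ++ l) = toWord k ++ true :: toWord l
  | [_], _ :: _, _, _ => rfl
  | a :: b :: k, l, _, hl => by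
    have ih := toWord_append (List.cons_ne_nil b k) hl
    simp only [List.cons_append, toWord, List.append_assoc] at ih ⊢
    rw [ih]

theorem toWord_reverse (k : List ℕ) : toWord k.reverse = (toWord k).reverse := by
  induction k with
  | nil => rfl
  | cons a k ih =>
    cases k with
    | nil => simp only [List.reverse_singleton, toWord, List.reverse_replicate]
    | cons b k =>
      rw [List.reverse_cons, toWord_append (by simp) (List.cons_ne_nil _ _), ih]
      simp only [toWord, List.reverse_append, List.reverse_cons, List.reverse_replicate,
        List.append_assoc, List.singleton_append]

theorem HDual_reverse (k : List ℕ) :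
    HDual k.reverse = fromWord ((toWord k).map not).reverse := by
  rw [HDual, toWord_reverse, List.map_reverse]

end Words

section TSum

/-- The general term `∏ᵢ 2 / (nᵢ - b) ^ lᵢ` of the series defining the Hurwitz-type multiple
`T`-value of index `l` at `1 - b`. -/
noncomputable def tWeight (b : ℝ) (l : List ℕ) (n : ParitySeq l.length) : ℝ≥0∞ :=
  ∏ i, 2 * ENNReal.ofReal ((n.1 i : ℝ) - b)⁻¹ ^ l.get i

/-- The nested sum `∑ (∏ᵢ 2 / (nᵢ - b) ^ lᵢ) h(n₁)`. With `h = 1` it is the Hurwitz-type multiple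
`T`-value of index `l` at `1 - b`; with `b = 0` and `h N = x ^ N` it is `AFn l x`. -/
noncomputable def tSum (b : ℝ) (l : List ℕ) (h : ℕ → ℝ≥0∞) : ℝ≥0∞ :=
  ∑' n, tWeight b l n * h n.top

variable {b : ℝ} {l : List ℕ} {h : ℕ → ℝ≥0∞}

theorem tWeight_cons (a : ℕ) (n : ParitySeq l.length) (j : ℕ) :
    tWeight b (a :: l) (n.cons j) =
      2 * ENNReal.ofReal (((n.top + 1 + 2 * j : ℕ) : ℝ) - b)⁻¹ ^ a * tWeight b l n :=
  Fin.prod_univ_succ _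

theorem tSum_nil : tSum b [] h = h 0 := by
  have : Unique (ParitySeq ([] : List ℕ).length) :=
    ⟨⟨⟨Fin.elim0, fun i => i.elim0, fun i => i.elim0, fun i => i.elim0⟩⟩, fun _ =>
      Subtype.ext (funext fun i => i.elim0)⟩
  rw [tSum, tsum_eq_single default fun n hn => absurd (Subsingleton.elim _ _) hn]
  exact one_mul _

theorem tSum_cons (a : ℕ) : tSum b (a :: l) h = tSum b l fun M =>
    ∑' j : ℕ, 2 * ENNReal.ofReal (((M + 1 + 2 * j : ℕ) : ℝ) - b)⁻¹ ^ a * h (M + 1 + 2 * j) := by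
  let e : ParitySeq l.length × ℕ ≃ ParitySeq (a :: l).length := ParitySeq.consEquiv l.length
  rw [tSum, ← e.tsum_eq, ENNReal.tsum_prod']
  refine tsum_congr fun n => ?_
  rw [← ENNReal.tsum_mul_left]
  refine tsum_congr fun j => ?_
  change tWeight b (a :: l) (n.cons j) * h (n.top + 1 + 2 * j) = _
  rw [tWeight_cons, mul_right_comm, mul_comm]

theorem tSum_plusOne (hl : l ≠ []) :
    tSum b (plusOne l) h = tSum b l fun N => ENNReal.ofReal ((N : ℝ) - b)⁻¹ * h N := by
  obtain ⟨a, l, rfl⟩ := List.exists_cons_of_ne_nil hl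
  simp only [plusOne, tSum_cons, pow_succ, mul_assoc]

theorem tSum_congr (hl : l ≠ []) {h' : ℕ → ℝ≥0∞} (hh : ∀ N, 0 < N → h N = h' N) :
    tSum b l h = tSum b l h' :=
  tsum_congr fun n => by rw [hh _ (n.top_pos (List.length_pos_iff.2 hl))]

theorem tSum_mul_right (c : ℝ≥0∞) : tSum b l (fun N => h N * c) = tSum b l h * c := by
  simp only [tSum, ← mul_assoc, ENNReal.tsum_mul_right]

theorem lintegral_tSum {ι : Type*} [MeasurableSpace ι] (μ : Measure ι) {f : ι → ℕ → ℝ≥0∞}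
    (hf : ∀ N, Measurable fun x => f x N) :
    ∫⁻ x, tSum b l (f x) ∂μ = tSum b l fun N => ∫⁻ x, f x N ∂μ := by
  simp only [tSum]
  rw [lintegral_tsum fun n => ((hf _).const_mul _).aemeasurable]
  exact tsum_congr fun n => lintegral_const_mul _ (hf _)

end TSum

section TValues

theorem tWeight_ne_top (b : ℝ) (l : List ℕ) (n : ParitySeq l.length) : tWeight b l n ≠ ∞ :=
  ENNReal.prod_ne_top fun _ _ =>
    ENNReal.mul_ne_top ENNReal.ofNat_ne_top (ENNReal.pow_ne_top ENNReal.ofReal_ne_top)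

theorem toReal_tWeight {b : ℝ} (hb : b < 1) (l : List ℕ) (n : ParitySeq l.length) :
    (tWeight b l n).toReal = ∏ i, 2 * ((n.1 i : ℝ) - b)⁻¹ ^ l.get i := by
  rw [tWeight, ENNReal.toReal_prod]
  refine Finset.prod_congr rfl fun i _ => ?_
  rw [ENNReal.toReal_mul, ENNReal.toReal_pow, ENNReal.toReal_ofNat,
    ENNReal.toReal_ofReal (inv_nonneg.2 (n.sub_pos hb i).le)]

theorem AFn_eq_toReal_tSum {k : List ℕ} (hk : k ≠ []) {x : ℝ} (hx : 0 ≤ x) :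
    AFn k x = (tSum 0 k fun N => ENNReal.ofReal (x ^ N)).toReal := by
  have hlen : 0 < k.length := List.length_pos_iff.2 hk
  rw [AFn, dif_pos hlen, tSum, ENNReal.tsum_toReal_eq fun n =>
    ENNReal.mul_ne_top (tWeight_ne_top _ _ _) ENNReal.ofReal_ne_top, ← tsum_mul_left]
  refine tsum_congr fun n => ?_
  rw [ENNReal.toReal_mul, ENNReal.toReal_ofReal (pow_nonneg hx _), toReal_tWeight one_pos,
    ParitySeq.top_eq n hlen, Finset.prod_mul_distrib, Finset.prod_const, Finset.card_univ,
    Fintype.card_fin, mul_assoc, div_eq_inv_mul, ← Finset.prod_inv_distrib]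
  simp only [sub_zero, inv_pow]

theorem HMTV_one_sub (l : List ℕ) (β : ℂ) :
    HMTV l (1 - β) =
      ∑' n : ParitySeq l.length, ∏ i, 2 * ((n.1 i : ℂ) - β) ^ (-(l.get i : ℤ)) := by
  rw [← (ParitySeq.equivStrictAnti l.length).tsum_eq, HMTV]
  refine tsum_congr fun m => ?_
  rw [Finset.prod_mul_distrib, Finset.prod_const, Finset.card_univ, Fintype.card_fin]
  refine congrArg _ (Finset.prod_congr rfl fun i _ => congrArg (· ^ _) ?_)
  have hle := sub_le_of_strictAnti_of_pos m.2.1 m.2.2 i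
  change _ = ((2 * m.1 i - (l.length - i.val) : ℕ) : ℂ) - β
  rw [Nat.cast_sub (by omega), Nat.cast_sub i.isLt.le]
  push_cast
  ring

theorem HMTV_one_sub_ofReal (l : List ℕ) {b : ℝ} (hb : b < 1) :
    HMTV l (1 - (b : ℂ)) = (tSum b l fun _ => 1).toReal := by
  simp only [tSum, mul_one]
  rw [HMTV_one_sub, ENNReal.tsum_toReal_eq (tWeight_ne_top b l), Complex.ofReal_tsum]
  refine tsum_congr fun n => ?_
  rw [toReal_tWeight hb]
  push_cast
  exact Finset.prod_congr rfl fun i _ => by rw [zpow_neg, zpow_natCast, inv_pow]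

theorem sub_le_norm_natCast_sub {b : ℝ} {β : ℂ} (hβ : β.re ≤ b) (n : ℕ) :
    (n : ℝ) - b ≤ ‖(n : ℂ) - β‖ :=
  calc (n : ℝ) - b ≤ ((n : ℂ) - β).re := by
        rw [Complex.sub_re, Complex.natCast_re]
        exact sub_le_sub_left hβ _
    _ ≤ ‖(n : ℂ) - β‖ := Complex.re_le_norm _

theorem norm_prod_le_toReal_tWeight {b : ℝ} (hb : b < 1) {l : List ℕ} (n : ParitySeq l.length)
    {β : ℂ} (hβ : β.re ≤ b) :
    ‖∏ i, 2 * ((n.1 i : ℂ) - β) ^ (-(l.get i : ℤ))‖ ≤ (tWeight b l n).toReal := by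
  rw [toReal_tWeight hb, norm_prod]
  refine Finset.prod_le_prod (fun _ _ => norm_nonneg _) fun i _ => ?_
  have hpos := n.sub_pos hb i
  have hle := sub_le_norm_natCast_sub hβ (n.1 i)
  rw [norm_mul, Complex.norm_two, norm_zpow, zpow_neg, zpow_natCast, inv_pow]
  gcongr

theorem differentiableAt_prod_zpow (l : List ℕ) (n : ParitySeq l.length) {β : ℂ} (hβ : β.re < 1) :
    DifferentiableAt ℂ (fun z => ∏ i, 2 * ((n.1 i : ℂ) - z) ^ (-(l.get i : ℤ))) β := by
  refine DifferentiableAt.fun_finsetProd fun i _ =>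
    (DifferentiableAt.zpow (by fun_prop) (.inl ?_)).const_mul _
  exact norm_pos_iff.1 ((n.sub_pos hβ i).trans_le (sub_le_norm_natCast_sub le_rfl _))

theorem differentiableOn_HMTV_one_sub {l : List ℕ}
    (hfin : ∀ b : ℝ, b < 1 → tSum b l (fun _ => 1) ≠ ∞) :
    DifferentiableOn ℂ (fun β => HMTV l (1 - β)) {β | β.re < 1} := by
  intro β (hβ : β.re < 1)
  obtain ⟨b, hβb, hb⟩ := exists_between hβ
  have hsummable : Summable fun n => (tWeight b l n).toReal := by
    have hsum := hfin b hb
    simp only [tSum, mul_one] at hsum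
    exact ENNReal.summable_toReal hsum
  have hopen : IsOpen {z : ℂ | z.re < b} := isOpen_lt Complex.continuous_re continuous_const
  have hdiff : DifferentiableOn ℂ (fun z => HMTV l (1 - z)) {z | z.re < b} := by
    simp only [HMTV_one_sub]
    exact Complex.differentiableOn_tsum_of_summable_norm hsummable
      (fun n z hz => (differentiableAt_prod_zpow l n (hz.trans hb)).differentiableWithinAt) hopen
      fun n z hz => norm_prod_le_toReal_tWeight hb n (le_of_lt hz)
  exact (hdiff.differentiableAt (hopen.mem_nhds hβb)).differentiableWithinAt

end TValues

section IteratedIntegrals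

/-- The densities of the two differential forms `dx / x` (letter `false`) and `2 dx / (1 - x ^ 2)`
(letter `true`), of which `AFn k` is an iterated integral. -/
noncomputable def oneForm : Bool → ℝ → ℝ≥0∞
  | false, x => ENNReal.ofReal (1 / x)
  | true, x => ENNReal.ofReal (2 / (1 - x ^ 2))

/-- The iterated integral over `x > t₁ > ⋯ > t_n > 0` of the forms spelled by a word, the first
letter going with the outermost variable `t₁`. -/
noncomputable def iterIntegral : List Bool → ℝ → ℝ≥0∞
  | [], _ => 1
  | c :: w, x => ∫⁻ y in Ioo 0 x, iterIntegral w y * oneForm c y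

@[fun_prop]
theorem measurable_oneForm (c : Bool) : Measurable (oneForm c) := by
  cases c <;> unfold oneForm <;> fun_prop

@[fun_prop]
theorem measurable_iterIntegral (w : List Bool) : Measurable (iterIntegral w) := by
  cases w with
  | nil => exact measurable_const
  | cons c w =>
    exact Monotone.measurable fun _ _ hxy => lintegral_mono_set (Ioo_subset_Ioo_right hxy)

theorem lintegral_Ioo_ofReal_pow_mul_oneForm_true {x : ℝ} (hx₀ : 0 ≤ x) (hx₁ : x ≤ 1) (M : ℕ) :
    ∫⁻ y in Ioo 0 x, ENNReal.ofReal (y ^ M) * oneForm true y =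
      ∑' j : ℕ, 2 * (ENNReal.ofReal (((M + 1 + 2 * j : ℕ) : ℝ)⁻¹) *
        ENNReal.ofReal (x ^ (M + 1 + 2 * j))) := by
  have hgeom : ∀ y ∈ Ioo 0 x, ENNReal.ofReal (y ^ M) * oneForm true y =
      ∑' j : ℕ, 2 * ENNReal.ofReal (y ^ (M + 2 * j)) := fun y hy => by
    rw [ENNReal.tsum_mul_left, tsum_ofReal_pow_add_two_mul hy.1.le (hy.2.trans_le hx₁), oneForm,
      ← ENNReal.ofReal_mul (pow_nonneg hy.1.le M), ← ENNReal.ofReal_ofNat 2,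
      ← ENNReal.ofReal_mul zero_le_two, mul_div_left_comm]
  rw [setLIntegral_congr_fun measurableSet_Ioo hgeom, lintegral_tsum fun j => by fun_prop]
  refine tsum_congr fun j => ?_
  rw [lintegral_const_mul _ (by fun_prop), lintegral_Ioo_ofReal_pow hx₀, add_right_comm]

theorem lintegral_Ioo_ofReal_pow_mul_oneForm_false {x : ℝ} (hx : 0 ≤ x) {N : ℕ} (hN : 0 < N) :
    ∫⁻ y in Ioo 0 x, ENNReal.ofReal (y ^ N) * oneForm false y =
      ENNReal.ofReal ((N : ℝ)⁻¹) * ENNReal.ofReal (x ^ N) := by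
  obtain ⟨N, rfl⟩ := Nat.exists_eq_succ_of_ne_zero hN.ne'
  rw [← lintegral_Ioo_ofReal_pow hx]
  refine setLIntegral_congr_fun measurableSet_Ioo fun y hy => ?_
  change ENNReal.ofReal (y ^ (N + 1)) * ENNReal.ofReal (1 / y) = ENNReal.ofReal (y ^ N)
  rw [← ENNReal.ofReal_mul (pow_nonneg hy.1.le _), mul_one_div, pow_succ,
    mul_div_cancel_right₀ _ hy.1.ne']

theorem tSum_ofReal_pow_fromWord_cons (c : Bool) (w : List Bool) {x : ℝ} (hx₀ : 0 ≤ x)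
    (hx₁ : x ≤ 1) :
    tSum 0 (fromWord (c :: w)) (fun N => ENNReal.ofReal (x ^ N)) =
      ∫⁻ y in Ioo 0 x, tSum 0 (fromWord w) (fun N => ENNReal.ofReal (y ^ N)) * oneForm c y := by
  simp only [← tSum_mul_right]
  rw [lintegral_tSum _ fun N => by fun_prop]
  cases c with
  | false =>
    rw [fromWord_false_cons, tSum_plusOne (fromWord_ne_nil w)]
    refine tSum_congr (fromWord_ne_nil w) fun N hN => ?_
    rw [sub_zero, lintegral_Ioo_ofReal_pow_mul_oneForm_false hx₀ hN]
  | true =>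
    rw [fromWord, tSum_cons]
    simp only [lintegral_Ioo_ofReal_pow_mul_oneForm_true hx₀ hx₁, sub_zero, pow_one, mul_assoc]

theorem tSum_ofReal_pow_fromWord (w : List Bool) {x : ℝ} (hx₀ : 0 ≤ x) (hx₁ : x ≤ 1) :
    tSum 0 (fromWord w) (fun N => ENNReal.ofReal (x ^ N)) = iterIntegral (w ++ [true]) x := by
  induction w generalizing x with
  | nil =>
    have hbase := lintegral_Ioo_ofReal_pow_mul_oneForm_true hx₀ hx₁ 0
    simp only [pow_zero, ENNReal.ofReal_one] at hbase
    rw [fromWord, tSum_cons, tSum_nil, List.nil_append]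
    simp only [iterIntegral, hbase, sub_zero, pow_one, mul_assoc]
  | cons c w ih =>
    rw [tSum_ofReal_pow_fromWord_cons c w hx₀ hx₁, List.cons_append, iterIntegral]
    exact setLIntegral_congr_fun measurableSet_Ioo fun y hy => by
      simp only [ih hy.1.le (hy.2.le.trans hx₁)]

theorem AFn_eq_toReal_iterIntegral {k : List ℕ} (hk : k ≠ []) (hpos : ∀ a ∈ k, 0 < a) {x : ℝ}
    (hx₀ : 0 ≤ x) (hx₁ : x ≤ 1) : AFn k x = (iterIntegral (toWord k ++ [true]) x).toReal := by
  rw [AFn_eq_toReal_tSum hk hx₀, ← tSum_ofReal_pow_fromWord _ hx₀ hx₁, fromWord_toWord hk hpos]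

end IteratedIntegrals

section TwistedIntegrals

/-- The involution `x ↦ (1 - x) / (1 + x)` of `(0, 1)`; pulling back along it exchanges the two
forms of `oneForm`, up to sign. -/
noncomputable def cayley (x : ℝ) : ℝ := (1 - x) / (1 + x)

/-- The iterated integral over `1 > t₁ > ⋯ > t_n > 0` of the forms spelled by a word, the outermost
one being multiplied by `cayley t₁ ^ s`. -/
noncomputable def twistedIntegral : List Bool → ℝ → ℝ≥0∞
  | [], _ => 1
  | c :: w, s => ∫⁻ x in Ioo 0 1, iterIntegral w x * (ENNReal.ofReal (cayley x ^ s) * oneForm c x)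

@[fun_prop]
theorem measurable_cayley : Measurable cayley := by
  unfold cayley
  fun_prop

theorem cayley_pos {x : ℝ} (hx : x ∈ Ioo 0 1) : 0 < cayley x :=
  div_pos (sub_pos.2 hx.2) (by linarith [hx.1])

theorem cayley_lt_one {x : ℝ} (hx : x ∈ Ioo 0 1) : cayley x < 1 := by
  rw [cayley, div_lt_one] <;> linarith [hx.1]

theorem hasDerivAt_cayley {x : ℝ} (hx : 1 + x ≠ 0) : HasDerivAt cayley (-2 / (1 + x) ^ 2) x := by
  refine (((hasDerivAt_id x).const_sub 1).div ((hasDerivAt_id x).const_add 1) hx).congr_deriv ?_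
  simp only [id]
  ring

theorem hasDerivAt_cayley_rpow {x : ℝ} (hx : x ∈ Ioo 0 1) {s : ℝ} (hs : s ≠ 0) :
    HasDerivAt (fun x => -(s⁻¹ * cayley x ^ s)) (cayley x ^ s * (2 / (1 - x ^ 2))) x := by
  have hadd : 1 + x ≠ 0 := by linarith [hx.1]
  have hsub : 1 - x ≠ 0 := by linarith [hx.2]
  have hc := cayley_pos hx
  refine ((((hasDerivAt_cayley hadd).rpow_const (p := s) (.inl hc.ne')).const_mul
    s⁻¹).neg).congr_deriv ?_
  rw [Real.rpow_sub_one hc.ne', show 1 - x ^ 2 = (1 - x) * (1 + x) by ring]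
  generalize cayley x ^ s = A
  rw [cayley]
  field_simp

theorem lintegral_Ioo_cayley_rpow_mul_oneForm_true {y s : ℝ} (hy : y ∈ Ico 0 1) (hs : 0 < s) :
    ∫⁻ x in Ioo y 1, ENNReal.ofReal (cayley x ^ s) * oneForm true x =
      ENNReal.ofReal s⁻¹ * ENNReal.ofReal (cayley y ^ s) := by
  have hsub : Ioo y 1 ⊆ Ioo 0 1 := Ioo_subset_Ioo_left hy.1
  have hcont : ContinuousOn (fun x => -(s⁻¹ * cayley x ^ s)) (Icc y 1) := by
    have hcayley : ContinuousOn cayley (Icc y 1) := fun x hx =>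
      (hasDerivAt_cayley (by linarith [hx.1, hy.1])).continuousAt.continuousWithinAt
    exact ((hcayley.rpow_const fun x _ => .inr hs.le).const_mul _).neg
  have hcongr : ∀ x ∈ Ioo y 1, ENNReal.ofReal (cayley x ^ s) * oneForm true x =
      ENNReal.ofReal (cayley x ^ s * (2 / (1 - x ^ 2))) := fun x hx =>
    (ENNReal.ofReal_mul (Real.rpow_nonneg (cayley_pos (hsub hx)).le s)).symm
  rw [setLIntegral_congr_fun measurableSet_Ioo hcongr,
    lintegral_Ioo_ofReal_of_hasDerivAt hy.2.le hcont
      (fun x hx => hasDerivAt_cayley_rpow (hsub hx) hs.ne') fun x hx => ?_]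
  · rw [show cayley 1 = 0 by rw [cayley, sub_self, zero_div], Real.zero_rpow hs.ne', mul_zero,
      neg_zero, zero_sub, neg_neg, ENNReal.ofReal_mul (inv_nonneg.2 hs.le)]
  · have hx' := hsub hx
    have hsq : 0 < 1 - x ^ 2 := by nlinarith [hx'.1, hx'.2]
    have hc := cayley_pos hx'
    positivity

theorem twistedIntegral_true_cons (w : List Bool) {s : ℝ} (hs : 0 < s) :
    twistedIntegral (true :: w) s = ENNReal.ofReal s⁻¹ * twistedIntegral w s := by
  cases w with
  | nil =>
    simp only [twistedIntegral, iterIntegral, one_mul]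
    rw [lintegral_Ioo_cayley_rpow_mul_oneForm_true (left_mem_Ico.2 one_pos) hs, cayley]
    simp
  | cons c w =>
    set φ : ℝ → ℝ≥0∞ := fun x => ENNReal.ofReal (cayley x ^ s) * oneForm true x
    have hφ : Measurable φ := by fun_prop
    calc twistedIntegral (true :: c :: w) s
        = ∫⁻ x in Ioo 0 1, ∫⁻ y in Ioo 0 x, iterIntegral w y * oneForm c y * φ x :=
          lintegral_congr fun x => (lintegral_mul_const _ (by fun_prop)).symm
      _ = ∫⁻ y in Ioo 0 1, ∫⁻ x in Ioo y 1, iterIntegral w y * oneForm c y * φ x :=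
          lintegral_lintegral_Ioo_swap 0 1 (by fun_prop)
      _ = ∫⁻ y in Ioo 0 1, ENNReal.ofReal s⁻¹ *
            (iterIntegral w y * (ENNReal.ofReal (cayley y ^ s) * oneForm c y)) := by
          refine setLIntegral_congr_fun measurableSet_Ioo fun y hy => ?_
          rw [lintegral_const_mul _ hφ,
            lintegral_Ioo_cayley_rpow_mul_oneForm_true ⟨hy.1.le, hy.2⟩ hs]
          ring
      _ = ENNReal.ofReal s⁻¹ * twistedIntegral (c :: w) s := lintegral_const_mul _ (by fun_prop)

theorem oneForm_false_eq_tsum {x : ℝ} (hx : x ∈ Ioo 0 1) :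
    oneForm false x = ∑' j : ℕ, 2 * (ENNReal.ofReal (cayley x ^ (1 + 2 * j)) * oneForm true x) := by
  have hc := cayley_pos hx
  have hadd : 1 + x ≠ 0 := by linarith [hx.1]
  have hx₀ : x ≠ 0 := hx.1.ne'
  have hsub : 1 - x ≠ 0 := by linarith [hx.2]
  have hsq : 1 - cayley x ^ 2 = 4 * x / (1 + x) ^ 2 := by
    rw [cayley]
    field_simp
    ring
  have hpos : 0 < cayley x / (1 - cayley x ^ 2) := by
    have := hx.1
    rw [hsq]
    positivity
  rw [ENNReal.tsum_mul_left, ENNReal.tsum_mul_right,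
    tsum_ofReal_pow_add_two_mul hc.le (cayley_lt_one hx), pow_one, oneForm, oneForm,
    ← ENNReal.ofReal_mul hpos.le, ← ENNReal.ofReal_ofNat 2, ← ENNReal.ofReal_mul zero_le_two, hsq,
    cayley, show 1 - x ^ 2 = (1 - x) * (1 + x) by ring]
  congr 1
  field_simp
  norm_num

theorem twistedIntegral_false_cons (w : List Bool) {s : ℝ} (hs : -1 < s) :
    twistedIntegral (false :: w) s = ∑' j : ℕ, 2 * (ENNReal.ofReal (s + 1 + 2 * j)⁻¹ *
      twistedIntegral w (s + 1 + 2 * j)) := by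
  have hcongr : ∀ x ∈ Ioo (0 : ℝ) 1,
      iterIntegral w x * (ENNReal.ofReal (cayley x ^ s) * oneForm false x) =
        ∑' j : ℕ, 2 * (iterIntegral w x *
          (ENNReal.ofReal (cayley x ^ (s + 1 + 2 * j)) * oneForm true x)) := fun x hx => by
    have hpow (j : ℕ) : ENNReal.ofReal (cayley x ^ (s + 1 + 2 * j)) =
        ENNReal.ofReal (cayley x ^ s) * ENNReal.ofReal (cayley x ^ (1 + 2 * j)) := by
      rw [← ENNReal.ofReal_mul (Real.rpow_nonneg (cayley_pos hx).le s),
        ← Real.rpow_add_natCast (cayley_pos hx).ne']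
      push_cast
      rw [add_assoc]
    rw [oneForm_false_eq_tsum hx, ← ENNReal.tsum_mul_left, ← ENNReal.tsum_mul_left]
    refine tsum_congr fun j => ?_
    rw [hpow]
    ring
  calc twistedIntegral (false :: w) s
      = ∑' j : ℕ, 2 * twistedIntegral (true :: w) (s + 1 + 2 * j) := by
        simp only [twistedIntegral]
        rw [setLIntegral_congr_fun measurableSet_Ioo hcongr, lintegral_tsum fun j => by fun_prop]
        exact tsum_congr fun j => lintegral_const_mul _ (by fun_prop)
    _ = _ := tsum_congr fun j => by
        rw [twistedIntegral_true_cons w (add_pos_of_pos_of_nonneg (by linarith) (by positivity))]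

end TwistedIntegrals

section Duality

theorem tSum_one_cons_twistedIntegral {b : ℝ} (hb : b < 1) (l : List ℕ) (w : List Bool) :
    tSum b (1 :: l) (fun N => twistedIntegral w (N - b)) =
      tSum b l fun N => twistedIntegral (false :: w) (N - b) := by
  rw [tSum_cons]
  refine congrArg _ (funext fun M => ?_)
  rw [twistedIntegral_false_cons w (by linarith [M.cast_nonneg (α := ℝ)])]
  refine tsum_congr fun j => ?_
  have harg : ((M + 1 + 2 * j : ℕ) : ℝ) - b = M - b + 1 + 2 * j := by
    push_cast
    ring
  rw [harg, pow_one, mul_assoc]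

theorem tSum_twistedIntegral_cons {b : ℝ} (hb : b < 1) (v : List Bool) (c : Bool) (w : List Bool) :
    tSum b (fromWord v) (fun N => twistedIntegral (c :: w) (N - b)) =
      tSum b (fromWord ((!c) :: v)) fun N => twistedIntegral w (N - b) := by
  cases c with
  | true =>
    rw [Bool.not_true, fromWord_false_cons, tSum_plusOne (fromWord_ne_nil v)]
    refine tSum_congr (fromWord_ne_nil v) fun N hN => twistedIntegral_true_cons w (sub_pos.2 ?_)
    exact hb.trans_le (Nat.one_le_cast.2 hN)
  | false => exact (tSum_one_cons_twistedIntegral hb (fromWord v) w).symm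

theorem tSum_twistedIntegral {b : ℝ} (hb : b < 1) (v w : List Bool) :
    tSum b (fromWord v) (fun N => twistedIntegral w (N - b)) =
      tSum b (fromWord ((w.map not).reverse ++ v)) fun _ => 1 := by
  induction w generalizing v with
  | nil => rfl
  | cons c w ih =>
    rw [tSum_twistedIntegral_cons hb, ih, List.map_cons, List.reverse_cons, List.append_assoc,
      List.singleton_append]

theorem twistedIntegral_false_cons_eq_tSum {b : ℝ} (hb : b < 1) (w : List Bool) :
    twistedIntegral (false :: w) (-b) = tSum b (fromWord (w.map not).reverse) fun _ => 1 := by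
  rw [← List.append_nil (w.map not).reverse, ← tSum_twistedIntegral hb, fromWord,
    tSum_one_cons_twistedIntegral hb, tSum_nil, Nat.cast_zero, zero_sub]

theorem twistedIntegral_toWord {b : ℝ} (hb : b < 1) (k : List ℕ) :
    twistedIntegral (false :: (toWord k ++ [true])) (-b) =
      tSum b (plusOne (HDual k.reverse)) fun _ => 1 := by
  rw [twistedIntegral_false_cons_eq_tSum hb, HDual_reverse, ← fromWord_false_cons, List.map_append,
    List.reverse_append]
  rfl

end Duality

section Finiteness

theorem exists_twistedIntegral_le {s₀ : ℝ} (hs₀ : 0 < s₀) (w : List Bool) :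
    ∃ C ≠ ∞, ∀ s, s₀ ≤ s → twistedIntegral (w ++ [true]) s ≤ C * ENNReal.ofReal s⁻¹ := by
  induction w with
  | nil =>
    refine ⟨1, ENNReal.one_ne_top, fun s hs => ?_⟩
    rw [List.nil_append, twistedIntegral_true_cons [] (hs₀.trans_le hs), mul_comm]
    rfl
  | cons c w ih =>
    obtain ⟨C, hC, hle⟩ := ih
    cases c with
    | true =>
      refine ⟨ENNReal.ofReal s₀⁻¹ * C, ENNReal.mul_ne_top ENNReal.ofReal_ne_top hC, fun s hs => ?_⟩
      rw [List.cons_append, twistedIntegral_true_cons _ (hs₀.trans_le hs), mul_assoc]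
      gcongr
      exact hle s hs
    | false =>
      refine ⟨C, hC, fun s hs => ?_⟩
      have hs_pos : 0 < s := hs₀.trans_le hs
      calc twistedIntegral (false :: (w ++ [true])) s
          = ∑' j : ℕ, 2 * (ENNReal.ofReal (s + 1 + 2 * j)⁻¹ *
              twistedIntegral (w ++ [true]) (s + 1 + 2 * j)) :=
            twistedIntegral_false_cons _ (by linarith)
        _ ≤ ∑' j : ℕ, C * (2 * ENNReal.ofReal (s + 1 + 2 * j)⁻¹ ^ 2) := by
            refine ENNReal.tsum_le_tsum fun j => ?_
            have hle_j := hle (s + 1 + 2 * j) (by linarith [j.cast_nonneg (α := ℝ)])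
            calc _ ≤ 2 * (ENNReal.ofReal (s + 1 + 2 * (j : ℝ))⁻¹ *
                  (C * ENNReal.ofReal (s + 1 + 2 * (j : ℝ))⁻¹)) := by gcongr
              _ = _ := by ring
        _ ≤ C * ENNReal.ofReal s⁻¹ := by
            rw [ENNReal.tsum_mul_left]
            gcongr
            exact tsum_two_mul_ofReal_inv_sq_le hs_pos

theorem twistedIntegral_ne_top (w : List Bool) {s : ℝ} (hs : 0 < s) :
    twistedIntegral (w ++ [true]) s ≠ ∞ := by
  obtain ⟨C, hC, hle⟩ := exists_twistedIntegral_le hs w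
  exact ne_top_of_le_ne_top (ENNReal.mul_ne_top hC ENNReal.ofReal_ne_top) (hle s le_rfl)

theorem twistedIntegral_false_cons_ne_top (w : List Bool) {s : ℝ} (hs : -1 < s) :
    twistedIntegral (false :: (w ++ [true])) s ≠ ∞ := by
  have hpeel : twistedIntegral (false :: (w ++ [true])) s =
      2 * (ENNReal.ofReal (s + 1)⁻¹ * twistedIntegral (w ++ [true]) (s + 1)) +
        twistedIntegral (false :: (w ++ [true])) (s + 2) := by
    rw [twistedIntegral_false_cons _ hs, twistedIntegral_false_cons _ (by linarith),
      tsum_eq_zero_add' ENNReal.summable]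
    congr 1
    · simp
    · refine tsum_congr fun j => ?_
      have harg : s + 1 + 2 * ((j + 1 : ℕ) : ℝ) = s + 2 + 1 + 2 * j := by
        push_cast
        ring
      rw [harg]
  rw [hpeel]
  exact ENNReal.add_ne_top.2 ⟨ENNReal.mul_ne_top ENNReal.ofNat_ne_top
    (ENNReal.mul_ne_top ENNReal.ofReal_ne_top (twistedIntegral_ne_top w (by linarith))),
    twistedIntegral_ne_top (false :: w) (by linarith)⟩

end Finiteness

section MomentGeneratingFunction

/-- The measure with density `iterIntegral w x / x` on `(0, 1)`. -/
noncomputable def iterMeasure (w : List Bool) : Measure ℝ :=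
  (volume.restrict (Ioo 0 1)).withDensity fun x => iterIntegral w x * oneForm false x

/-- The random variable `-log ((1 - x) / (1 + x))`, whose moment generating function is the
twisted integral. -/
noncomputable def negLogCayley (x : ℝ) : ℝ := -Real.log (cayley x)

@[fun_prop]
theorem measurable_negLogCayley : Measurable negLogCayley := by
  unfold negLogCayley
  fun_prop

theorem exp_mul_negLogCayley {x : ℝ} (hx : x ∈ Ioo 0 1) (t : ℝ) :
    Real.exp (t * negLogCayley x) = cayley x ^ (-t) := by
  rw [Real.rpow_def_of_pos (cayley_pos hx), negLogCayley, mul_neg, mul_neg, mul_comm]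

theorem cexp_mul_negLogCayley {x : ℝ} (hx : x ∈ Ioo 0 1) (α : ℂ) :
    Complex.exp (α * negLogCayley x) = ((cayley x : ℂ) ^ α)⁻¹ := by
  have hc := cayley_pos hx
  rw [Complex.cpow_def_of_ne_zero (Complex.ofReal_ne_zero.2 hc.ne'), ← Complex.ofReal_log hc.le,
    ← Complex.exp_neg, negLogCayley, Complex.ofReal_neg, mul_neg, mul_comm]

theorem lintegral_exp_mul_negLogCayley (w : List Bool) (t : ℝ) :
    ∫⁻ x, ENNReal.ofReal (Real.exp (t * negLogCayley x)) ∂iterMeasure w =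
      twistedIntegral (false :: w) (-t) := by
  rw [iterMeasure, lintegral_withDensity_eq_lintegral_mul _ (by fun_prop) (by fun_prop)]
  refine setLIntegral_congr_fun measurableSet_Ioo fun x hx => ?_
  rw [Pi.mul_apply, exp_mul_negLogCayley hx, mul_assoc, mul_comm (oneForm _ _)]

theorem mgf_negLogCayley (w : List Bool) (t : ℝ) :
    mgf negLogCayley (iterMeasure w) t = (twistedIntegral (false :: w) (-t)).toReal := by
  rw [mgf, integral_eq_lintegral_of_nonneg_ae (.of_forall fun x => (Real.exp_pos _).le)
    (by fun_prop), lintegral_exp_mul_negLogCayley]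

theorem mem_interior_integrableExpSet (w : List Bool) {t : ℝ} (ht : t < 1) :
    t ∈ interior (integrableExpSet negLogCayley (iterMeasure (w ++ [true]))) := by
  refine mem_interior.2 ⟨Iio 1, fun s hs => ?_, isOpen_Iio, ht⟩
  refine ⟨by fun_prop, ?_⟩
  rw [hasFiniteIntegral_iff_ofReal (.of_forall fun x => (Real.exp_pos _).le),
    lintegral_exp_mul_negLogCayley]
  exact (twistedIntegral_false_cons_ne_top w (neg_lt_neg hs)).lt_top

theorem eqOn_complexMGF_HMTV (k : List ℕ) :
    EqOn (complexMGF negLogCayley (iterMeasure (toWord k ++ [true])))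
      (fun β => HMTV (plusOne (HDual k.reverse)) (1 - β)) {β | β.re < 1} := by
  have hopen : IsOpen {β : ℂ | β.re < 1} := isOpen_lt Complex.continuous_re continuous_const
  have hfin (b : ℝ) (hb : b < 1) : tSum b (plusOne (HDual k.reverse)) (fun _ => 1) ≠ ∞ := by
    rw [← twistedIntegral_toWord hb]
    exact twistedIntegral_false_cons_ne_top _ (neg_lt_neg hb)
  have hreal (t : ℝ) (ht : t < 1) :
      complexMGF negLogCayley (iterMeasure (toWord k ++ [true])) t =
        HMTV (plusOne (HDual k.reverse)) (1 - t) := by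
    rw [complexMGF_ofReal, mgf_negLogCayley, twistedIntegral_toWord ht, HMTV_one_sub_ofReal _ ht]
  refine eqOn_of_frequently_eq_ofReal (t := 0)
    (analyticOnNhd_complexMGF.mono fun β hβ => mem_interior_integrableExpSet (toWord k) hβ)
    ((differentiableOn_HMTV_one_sub hfin).analyticOnNhd hopen)
    (convex_halfSpace_re_lt 1).isPreconnected (by simp) (Eventually.frequently ?_)
  filter_upwards [nhdsWithin_le_nhds (eventually_lt_nhds one_pos)] with t ht using hreal t ht

theorem integral_iterMeasure (w : List Bool) (f : ℝ → ℂ) :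
    ∫ x, f x ∂iterMeasure (w ++ [true]) =
      ∫ x in (0 : ℝ)..1, ((iterIntegral (w ++ [true]) x).toReal / x : ℝ) * f x := by
  have hfin : ∀ᵐ x ∂volume.restrict (Ioo (0 : ℝ) 1),
      iterIntegral (w ++ [true]) x * oneForm false x < ∞ := by
    refine ae_lt_top (by fun_prop) ?_
    have := twistedIntegral_false_cons_ne_top w neg_one_lt_zero
    simpa only [twistedIntegral, Real.rpow_zero, ENNReal.ofReal_one, one_mul] using this
  rw [iterMeasure, integral_withDensity_eq_integral_toReal_smul (by fun_prop) hfin,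
    intervalIntegral.integral_of_le zero_le_one, integral_Ioc_eq_integral_Ioo]
  refine setIntegral_congr_fun measurableSet_Ioo fun x hx => ?_
  have hpos : 0 ≤ 1 / x := one_div_nonneg.2 hx.1.le
  simp only [oneForm, ENNReal.toReal_mul, ENNReal.toReal_ofReal hpos, mul_one_div,
    Complex.real_smul]

theorem integral_AFn_mul_log_pow {k : List ℕ} (hk : k ≠ []) (hpos : ∀ a ∈ k, 0 < a) (m : ℕ)
    (α : ℂ) :
    ∫ x in (0 : ℝ)..1, ((AFn k x * Real.log (cayley x) ^ m : ℝ) : ℂ) / (x * (cayley x : ℂ) ^ α) =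
      (-1) ^ m * ∫ x, (negLogCayley x : ℂ) ^ m * Complex.exp (α * negLogCayley x)
        ∂iterMeasure (toWord k ++ [true]) := by
  rw [integral_iterMeasure, ← intervalIntegral.integral_const_mul]
  refine intervalIntegral.integral_congr_Ioo_of_le zero_le_one fun x hx => ?_
  have hlog : (Real.log (cayley x) : ℂ) ^ m = (-1) ^ m * (negLogCayley x : ℂ) ^ m := by
    rw [negLogCayley, Complex.ofReal_neg, ← neg_pow, neg_neg]
  simp only [AFn_eq_toReal_iterIntegral hk hpos hx.1.le hx.2.le, cexp_mul_negLogCayley hx,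
    Complex.ofReal_mul, Complex.ofReal_pow, Complex.ofReal_div, hlog]
  ring

end MomentGeneratingFunction

theorem stmt5 (k : List ℕ) (hk : k ≠ []) (hkpos : ∀ a ∈ k, 0 < a)
    (m : ℕ) (hm : 0 < m) (α : ℂ) (hα : ∀ j : ℕ, 0 < j → α ≠ (j : ℂ)) (hre : α.re < 1) :
    (∫ x in (0:ℝ)..1,
        ((AFn k x * Real.log ((1 - x) / (1 + x)) ^ m : ℝ) : ℂ) /
          ((x : ℂ) * (((1 - x) / (1 + x) : ℝ) : ℂ) ^ α)) =
      (-1) ^ m *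
        iteratedDeriv m (fun β : ℂ => HMTV (plusOne (HDual k.reverse)) (1 - β)) α := by
  have hMGF : (fun β => HMTV (plusOne (HDual k.reverse)) (1 - β)) =ᶠ[𝓝 α]
      complexMGF negLogCayley (iterMeasure (toWord k ++ [true])) :=
    (eqOn_complexMGF_HMTV k).symm.eventuallyEq_of_mem
      ((isOpen_lt Complex.continuous_re continuous_const).mem_nhds hre)
  rw [hMGF.iteratedDeriv_eq, iteratedDeriv_complexMGF (mem_interior_integrableExpSet _ hre)]
  exact integral_AFn_mul_log_pow hk hkpos m α
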